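/- Let Q_{k−1}, Q_k : Ω → (S×A → ℝ) be random functions and ε ≥ 0 be such that 𝔼[‖Q_k − 𝒯Q_{k−1}‖₂²] ≤ ε. Then 𝔼[‖Q_k − Q*‖_∞²] ≤ (1 + 2γ²/(1−γ²))·ε + ((γ²+1)/2)·𝔼[‖Q_{k−1} − Q*‖_∞²]. -/

import Mathlib

open MeasureTheory ProbabilityTheory Finset

/-- sup norm of a real function on a finite nonempty type. -/
noncomputable def supNorm {ι : Type*} [Fintype ι] [Nonempty ι] (f : ι → ℝ) : ℝ :=
  Finset.univ.sup' Finset.univ_nonempty (fun i => |f i|)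

/-- squared Euclidean norm of a real function on a finite type. -/
def sqNorm {ι : Type*} [Fintype ι] (f : ι → ℝ) : ℝ := ∑ i, (f i) ^ 2

/-- Bellman optimality operator. -/
noncomputable def bellman {S A : Type*} [Fintype S] [Fintype A] [Nonempty A]
    (P : S → A → S → ℝ) (r : S → A → ℝ) (γ : ℝ) (Q : S × A → ℝ) : S × A → ℝ :=
  fun x => r x.1 x.2 + γ * ∑ s' : S, P x.1 x.2 s' *
    Finset.univ.sup' Finset.univ_nonempty (fun a' => Q (s', a'))


theorem abs_le_supNorm_aux {ι : Type*} [Fintype ι] [Nonempty ι] (f : ι → ℝ) (i : ι) :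
    |f i| ≤ supNorm f :=
  Finset.le_sup' (fun i => |f i|) (Finset.mem_univ i)

theorem bellman_contr_aux {S A : Type*} [Fintype S] [Fintype A] [Nonempty S] [Nonempty A]
    (P : S → A → S → ℝ) (hP0 : ∀ s a s', 0 ≤ P s a s') (hP1 : ∀ s a, ∑ s', P s a s' = 1)
    (r : S → A → ℝ) (γ : ℝ) (hγ : 0 ≤ γ) (Q Q' : S × A → ℝ) (D : ℝ)
    (hD : ∀ x, Q x ≤ Q' x + D) (x : S × A) :
    bellman P r γ Q x ≤ bellman P r γ Q' x + γ * D := by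
  unfold bellman
  have h : ∑ s' : S, P x.1 x.2 s' *
      Finset.univ.sup' Finset.univ_nonempty (fun a' => Q (s', a')) ≤
      ∑ s' : S, P x.1 x.2 s' *
      (Finset.univ.sup' Finset.univ_nonempty (fun a' => Q' (s', a')) + D) := by
    refine Finset.sum_le_sum fun s' _ => mul_le_mul_of_nonneg_left ?_ (hP0 _ _ _)
    refine Finset.sup'_le _ _ fun a _ => (hD (s', a)).trans ?_
    have := Finset.le_sup' (fun a' => Q' (s', a')) (Finset.mem_univ a)
    linarith
  simp only [mul_add, Finset.sum_add_distrib, ← Finset.sum_mul, hP1, one_mul] at h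
  have := mul_le_mul_of_nonneg_left h hγ
  rw [mul_add] at this
  linarith

theorem squared_error_one_step_recursion
    {S A : Type*} [Fintype S] [Fintype A] [Nonempty S] [Nonempty A]
    {Ω : Type*} [MeasurableSpace Ω] (μ : Measure Ω) [IsProbabilityMeasure μ]
    (P : S → A → S → ℝ) (hP0 : ∀ s a s', 0 ≤ P s a s') (hP1 : ∀ s a, ∑ s', P s a s' = 1)
    (r : S → A → ℝ) (hr : ∀ s a, |r s a| ≤ 1)
    (γ : ℝ) (hγ : γ ∈ Set.Ioo (0 : ℝ) 1)
    (Qstar : S × A → ℝ) (hQstar : bellman P r γ Qstar = Qstar)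
    (Qprev Qk : Ω → S × A → ℝ) (hQprev : Measurable Qprev) (hQk : Measurable Qk)
    (ε : ℝ) (hε0 : 0 ≤ ε)
    (hmomInt : Integrable (fun ω => sqNorm (fun x => Qk ω x - bellman P r γ (Qprev ω) x)) μ)
    (hmom : ∫ ω, sqNorm (fun x => Qk ω x - bellman P r γ (Qprev ω) x) ∂μ ≤ ε)
    (hintk : Integrable (fun ω => (supNorm (fun x => Qk ω x - Qstar x)) ^ 2) μ)
    (hintp : Integrable (fun ω => (supNorm (fun x => Qprev ω x - Qstar x)) ^ 2) μ) :
    ∫ ω, (supNorm (fun x => Qk ω x - Qstar x)) ^ 2 ∂μ ≤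
      (1 + 2 * γ ^ 2 / (1 - γ ^ 2)) * ε
        + ((γ ^ 2 + 1) / 2) * ∫ ω, (supNorm (fun x => Qprev ω x - Qstar x)) ^ 2 ∂μ := by
  obtain ⟨h0, h1⟩ := hγ
  have hd : 0 < 1 - γ ^ 2 := by nlinarith
  have hc : 0 ≤ 1 + 2 * γ ^ 2 / (1 - γ ^ 2) := by positivity
  have key : ∀ ω, (supNorm (fun x => Qk ω x - Qstar x)) ^ 2 ≤
      (1 + 2 * γ ^ 2 / (1 - γ ^ 2)) * sqNorm (fun x => Qk ω x - bellman P r γ (Qprev ω) x)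
        + ((γ ^ 2 + 1) / 2) * (supNorm (fun x => Qprev ω x - Qstar x)) ^ 2 := by
    intro ω
    set b := supNorm (fun x => Qprev ω x - Qstar x) with hb
    obtain ⟨x, -, hx⟩ := Finset.exists_mem_eq_sup' (Finset.univ_nonempty (α := S × A))
      (fun x => |Qk ω x - Qstar x|)
    have hx' : supNorm (fun x => Qk ω x - Qstar x) = |Qk ω x - Qstar x| := hx
    rw [hx']
    have hbb : ∀ x, |Qprev ω x - Qstar x| ≤ b := fun x =>
      abs_le_supNorm_aux (fun x => Qprev ω x - Qstar x) x
    have u1 := bellman_contr_aux P hP0 hP1 r γ h0.le (Qprev ω) Qstar b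
      (fun y => by linarith [(abs_le.1 (hbb y)).2]) x
    have u2 := bellman_contr_aux P hP0 hP1 r γ h0.le Qstar (Qprev ω) b
      (fun y => by linarith [(abs_le.1 (hbb y)).1]) x
    rw [hQstar] at u1 u2
    have ha : (Qk ω x - bellman P r γ (Qprev ω) x) ^ 2 ≤
        sqNorm (fun x => Qk ω x - bellman P r γ (Qprev ω) x) :=
      Finset.single_le_sum (f := fun x => (Qk ω x - bellman P r γ (Qprev ω) x) ^ 2)
        (fun i _ => sq_nonneg _) (Finset.mem_univ x)
    have hmul := mul_le_mul_of_nonneg_left ha hc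
    refine le_trans ?_ (add_le_add_left hmul _)
    have h3 : |Qk ω x - Qstar x| ≤ |Qk ω x - bellman P r γ (Qprev ω) x| + γ * b := by
      have e : Qk ω x - Qstar x = (Qk ω x - bellman P r γ (Qprev ω) x)
        + (bellman P r γ (Qprev ω) x - Qstar x) := by ring
      rw [e]
      refine (abs_add_le _ _).trans (add_le_add le_rfl ?_)
      rw [abs_le]; constructor <;> linarith
    rw [← sq_abs (Qk ω x - bellman P r γ (Qprev ω) x)]
    generalize |Qk ω x - bellman P r γ (Qprev ω) x| = a at h3
    have h4 : |Qk ω x - Qstar x| ^ 2 ≤ (a + γ * b) ^ 2 :=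
      pow_le_pow_left₀ (abs_nonneg _) h3 2
    refine h4.trans ?_
    have e : (1 + 2 * γ ^ 2 / (1 - γ ^ 2)) * a ^ 2 + ((γ ^ 2 + 1) / 2) * b ^ 2
        - (a + γ * b) ^ 2 = (2 * γ * a - (1 - γ ^ 2) * b) ^ 2 / (2 * (1 - γ ^ 2)) := by
      have := hd.ne'
      field_simp
      ring
    have : 0 ≤ (2 * γ * a - (1 - γ ^ 2) * b) ^ 2 / (2 * (1 - γ ^ 2)) := by positivity
    linarith
  have hI := integral_mono hintk
    ((hmomInt.const_mul (1 + 2 * γ ^ 2 / (1 - γ ^ 2))).add (hintp.const_mul ((γ ^ 2 + 1) / 2))) key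
  refine hI.trans ?_
  simp only [Pi.add_apply]
  rw [integral_add (hmomInt.const_mul _) (hintp.const_mul _), integral_const_mul,
    integral_const_mul]
  have := mul_le_mul_of_nonneg_left hmom hc
  linarith
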